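/- Let γ₁, …, γ_m be m distinct Jordan curves in ℝ² such that at most one pair of them is semi-disjoint (intersecting in exactly one point) and all the other pairs are disjoint, and let Γ = γ₁ ∪ ⋯ ∪ γ_m. Then the complement ℝ² ∖ Γ has exactly m+1 connected components, of which exactly one is unbounded and the remaining m are bounded. -/

import Mathlib

/-!
A rational function without zeros and poles on a closed set `K` whose divisor consists of points of
distinct bounded components of `Kᶜ` has a continuous logarithm on `K` only if its divisor is zero
(Borsuk). On a Jordan curve a continuous logarithm exists as soon as the winding number of the
rational function vanishes, and logarithms on two closed sets with connected intersection can be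
glued. So the winding numbers around `m` curves are `m` integers which decide the existence of a
logarithm on `Γ`, and `Γᶜ` has at most `m` bounded components.

Conversely, `γᶜ` is separated near every point of a Jordan curve `γ`, by Janiszewski's argument with
two arcs of `γ`. Hence each curve, when it is added to the previous ones, splits a component.
-/

section Logarithms

open Set Metric Complex Topology

variable {X : Type*} [TopologicalSpace X] {f g : X → ℂ} {S T : Set X}

/-- `f` has a continuous logarithm on `S`. The values of `f` outside `S` are irrelevant. -/
def HasLogOn (f : X → ℂ) (S : Set X) : Prop :=
  ∃ l : X → ℂ, ContinuousOn l S ∧ EqOn (exp ∘ l) f S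

namespace HasLogOn

theorem mono (h : HasLogOn f T) (hST : S ⊆ T) : HasLogOn f S :=
  let ⟨l, hl, hlf⟩ := h
  ⟨l, hl.mono hST, hlf.mono hST⟩

theorem congr (h : HasLogOn f S) (hfg : EqOn f g S) : HasLogOn g S :=
  let ⟨l, hl, hlf⟩ := h
  ⟨l, hl, hlf.trans hfg⟩

theorem mul (hf : HasLogOn f S) (hg : HasLogOn g S) : HasLogOn (fun x ↦ f x * g x) S := by
  obtain ⟨l, hl, hlf⟩ := hf
  obtain ⟨k, hk, hkg⟩ := hg
  exact ⟨fun x ↦ l x + k x, hl.add hk, fun x hx ↦ by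
    simp [exp_add, ← hlf hx, ← hkg hx]⟩

end HasLogOn

theorem hasLogOn_empty (f : X → ℂ) : HasLogOn f ∅ :=
  ⟨0, continuousOn_empty _, eqOn_empty _ _⟩

theorem hasLogOn_of_convex {E : Type*} [NormedAddCommGroup E] [NormedSpace ℝ E] {f : E → ℂ}
    {S : Set E} (hS : Convex ℝ S) (hSo : IsOpen S) (hf : ContinuousOn f S)
    (hf₀ : ∀ x ∈ S, f x ≠ 0) : HasLogOn f S := by
  obtain rfl | hne := S.eq_empty_or_nonempty
  · exact hasLogOn_empty f
  have := hS.contractibleSpace hne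
  have hSc : IsSimplyConnected S := SimplyConnectedSpace.ofContractible S
  exact exists_continuousOn_eqOn_exp_comp hSc hSo hf fun ⟨x, hx, h⟩ ↦ hf₀ x hx h

theorem exists_eq_add_const_of_exp_eq (hS : IsPreconnected S) (hf : ContinuousOn f S)
    (hg : ContinuousOn g S) (hfg : EqOn (exp ∘ f) (exp ∘ g) S) :
    ∃ c, exp c = 1 ∧ ∀ x ∈ S, f x = g x + c := by
  obtain rfl | ⟨a, ha⟩ := S.eq_empty_or_nonempty
  · exact ⟨0, exp_zero, by simp⟩
  have hexp : ∀ x ∈ S, exp (f x - g x) = 1 := fun x hx ↦ by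
    rw [exp_sub, div_eq_one_iff_eq (exp_ne_zero _)]
    exact hfg hx
  have hdiscrete : DiscreteTopology (AddSubgroup.zmultiples (2 * Real.pi * I) : Set ℂ) :=
    NormedSpace.discreteTopology_zmultiples _
  have hmaps : MapsTo (f - g) S (AddSubgroup.zmultiples (2 * Real.pi * I) : Set ℂ) := by
    intro x hx
    obtain ⟨n, hn⟩ := exp_eq_one_iff.1 (hexp x hx)
    exact AddSubgroup.mem_zmultiples_iff.2 ⟨n, by simp [hn]⟩
  refine ⟨f a - g a, hexp a ha, fun x hx ↦ ?_⟩
  have hconst : (f - g) x = (f - g) a :=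
    hS.constant_of_mapsTo ⟨hdiscrete⟩ (hf.sub hg) hmaps hx ha
  exact sub_eq_iff_eq_add'.1 hconst

/- Two logarithms of `f` differ by a constant period on the connected set `P`, so after shifting
one of them they agree on `S ∩ T`. -/
theorem HasLogOn.exists_eqOn_union {S' T' P : Set X} (hS : HasLogOn f S) (hT : HasLogOn f T)
    (hP : IsPreconnected P) (hPST : P ⊆ S ∩ T) (hS' : S' ⊆ S) (hT' : T' ⊆ T)
    (hST' : S' ∩ T' ⊆ P) :
    ∃ l, ContinuousOn l S' ∧ ContinuousOn l T' ∧ EqOn (exp ∘ l) f (S' ∪ T') := by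
  classical
  obtain ⟨l, hl, hlf⟩ := hS
  obtain ⟨k, hk, hkf⟩ := hT
  obtain ⟨c, hc, hlk⟩ := exists_eq_add_const_of_exp_eq hP
    (hl.mono fun x hx ↦ (hPST hx).1) (hk.mono fun x hx ↦ (hPST hx).2)
    fun x hx ↦ (hlf (hPST hx).1).trans (hkf (hPST hx).2).symm
  have hpS : EqOn (S'.piecewise l fun x ↦ k x + c) l S' := piecewise_eqOn S' _ _
  have hpT : EqOn (S'.piecewise l fun x ↦ k x + c) (fun x ↦ k x + c) T' := fun x hx ↦ by
    by_cases hxS : x ∈ S'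
    · exact (hpS hxS).trans (hlk x (hST' ⟨hxS, hx⟩))
    · exact piecewise_eq_of_notMem S' _ _ hxS
  refine ⟨S'.piecewise l fun x ↦ k x + c, (hl.mono hS').congr hpS,
    ((hk.mono hT').add continuousOn_const).congr hpT, ?_⟩
  rintro x (hx | hx)
  · exact (congrArg exp (hpS hx)).trans (hlf (hS' hx))
  · calc exp (S'.piecewise l (fun x ↦ k x + c) x) = exp (k x) := by
          rw [hpT hx, exp_add, hc, mul_one]
      _ = f x := hkf (hT' hx)

theorem HasLogOn.union_of_isClosed (hS : HasLogOn f S) (hT : HasLogOn f T) (hSc : IsClosed S)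
    (hTc : IsClosed T) (hST : IsPreconnected (S ∩ T)) : HasLogOn f (S ∪ T) :=
  let ⟨l, hlS, hlT, hlf⟩ := hS.exists_eqOn_union hT hST subset_rfl subset_rfl subset_rfl subset_rfl
  ⟨l, hlS.union_of_isClosed hlT hSc hTc, hlf⟩

/- The mechanism of Janiszewski's theorem: if `U \ (A ∪ B)` were not separated by `A ∪ B`, then the
logarithms off `A` and off `B` would fit together around `A ∩ B`. -/
theorem HasLogOn.diff_inter {A B U P : Set X} (hA : HasLogOn f Aᶜ) (hB : HasLogOn f Bᶜ)
    (hAc : IsClosed A) (hBc : IsClosed B) (hU : IsOpen U) (hP : IsPreconnected P)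
    (hPAB : P ⊆ (A ∪ B)ᶜ) (hUP : U \ (A ∪ B) ⊆ P) : HasLogOn f (U \ (A ∩ B)) := by
  obtain ⟨l, hlA, hlB, hlf⟩ := hA.exists_eqOn_union (S' := U \ A) (T' := U \ B) hB hP
    (by rwa [← compl_union]) (fun _ h ↦ h.2) (fun _ h ↦ h.2) (by rwa [sdiff_inter_sdiff])
  rw [sdiff_inter]
  exact ⟨l, hlA.union_of_isOpen hlB (hU.sdiff hAc) (hU.sdiff hBc), hlf⟩

theorem hasLogOn_range_of_comp {Y : Type*} [TopologicalSpace Y] {φ : Y → X} (hφ : IsEmbedding φ)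
    (h : HasLogOn (f ∘ φ) univ) : HasLogOn f (range φ) := by
  obtain ⟨l, hl, hlf⟩ := h
  have hlφ : Function.extend φ l 0 ∘ φ = l := Function.extend_comp hφ.injective l 0
  refine ⟨Function.extend φ l 0, ?_, ?_⟩
  · rwa [← image_univ, hφ.isInducing.continuousOn_image_iff, hlφ]
  · rintro _ ⟨y, rfl⟩
    exact (congrArg exp (congrFun hlφ y)).trans (hlf (mem_univ y))

theorem not_hasLogOn_sphere_zpow (a : ℂ) {r : ℝ} (hr : 0 < r) {n : ℤ} (hn : n ≠ 0) :
    ¬ HasLogOn (fun z ↦ (z - a) ^ n) (sphere a r) := by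
  rintro ⟨l, hl, hlexp⟩
  have hcircle : ∀ t, circleMap a r t ∈ sphere a r := circleMap_mem_sphere a hr.le
  obtain ⟨c, -, hc⟩ := exists_eq_add_const_of_exp_eq (f := fun t : ℝ ↦ l (circleMap a r t))
    (g := fun t : ℝ ↦ n * (Real.log r + t * I)) isPreconnected_univ
    (hl.comp_continuous (continuous_circleMap a r) hcircle).continuousOn (by fun_prop) fun t _ ↦ by
      have hexp := hlexp (hcircle t)
      simp only [Function.comp_apply, circleMap, add_sub_cancel_left] at hexp ⊢
      rw [hexp, exp_int_mul, exp_add, ← ofReal_exp, Real.exp_log hr]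
  have hperiod : l (circleMap a r (2 * Real.pi)) = l (circleMap a r 0) := by
    simp [circleMap]
  rw [hc _ trivial, hc _ trivial] at hperiod
  simp [hn] at hperiod

/- As `t` runs from `0` to `1` along a path `p` in `K` from `a` to `b`, the map
`z ↦ (z - p (1 - t)) / (z - b)` deforms the constant `1` into `(z - a) / (z - b)`. -/
theorem hasLogOn_div_compl_of_joinedIn {K : Set ℂ} {a b : ℂ} (h : JoinedIn K a b) :
    HasLogOn (fun z ↦ (z - a) / (z - b)) Kᶜ := by
  obtain ⟨p, hp⟩ := h
  have hne : ∀ (t : unitInterval) (z : ↥Kᶜ), (z : ℂ) - p t ≠ 0 := fun t z hz ↦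
    z.2 (sub_eq_zero.1 hz ▸ hp t)
  have hneb : ∀ z : ↥Kᶜ, (z : ℂ) - b ≠ 0 := fun z ↦ by simpa using hne 1 z
  let H : C(unitInterval × ↥Kᶜ, {z : ℂ // z ≠ 0}) :=
    ⟨fun x ↦ ⟨(x.2 - p (unitInterval.symm x.1)) / (x.2 - b), div_ne_zero (hne _ _) (hneb _)⟩,
      .subtype_mk (.div (by fun_prop) (by fun_prop) fun _ ↦ hneb _) _⟩
  have hH₀ : ∀ z, H (0, z) = ⟨exp (ContinuousMap.const ↥Kᶜ (0 : ℂ) z), exp_ne_zero _⟩ := fun z ↦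
    Subtype.ext (by simp [H, div_self (hneb z)])
  let L := isCoveringMap_exp.liftHomotopy H (.const _ 0) hH₀
  have hL : ∀ x, exp (L x) = H x := fun x ↦
    congrArg Subtype.val (congrFun (isCoveringMap_exp.liftHomotopy_lifts H _ hH₀) x)
  rw [← Subtype.range_coe (s := Kᶜ)]
  refine hasLogOn_range_of_comp .subtypeVal ⟨fun z ↦ L (1, z), by fun_prop, fun z _ ↦ ?_⟩
  simp [hL, H]

end Logarithms

section ComplementComponents

open Set Metric Bornology

variable {X : Type*} [TopologicalSpace X] {K : Set X} {x y : X}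

/-- The connected components of the complement of `K`. -/
def complComponents (K : Set X) : Set (Set X) :=
  {D | ∃ x ∈ Kᶜ, D = connectedComponentIn Kᶜ x}

theorem frontier_connectedComponentIn_compl_subset [LocallyConnectedSpace X] (hK : IsClosed K)
    (x : X) : frontier (connectedComponentIn Kᶜ x) ⊆ K := by
  intro y hy
  by_contra hyK
  rw [hK.isOpen_compl.connectedComponentIn.frontier_eq] at hy
  obtain ⟨z, hzy, hzx⟩ := mem_closure_iff.1 hy.1 _ hK.isOpen_compl.connectedComponentIn
    (mem_connectedComponentIn hyK)
  refine hy.2 ?_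
  rw [connectedComponentIn_eq hzx, ← connectedComponentIn_eq hzy]
  exact mem_connectedComponentIn hyK

theorem closure_connectedComponentIn_compl_subset [LocallyConnectedSpace X] (hK : IsClosed K)
    (x : X) : closure (connectedComponentIn Kᶜ x) ⊆ connectedComponentIn Kᶜ x ∪ K := by
  rw [closure_eq_self_union_frontier]
  exact union_subset_union_right _ (frontier_connectedComponentIn_compl_subset hK x)

theorem encard_complComponents_add_one_le {X : Type*} [TopologicalSpace X] {K L : Set X} {y : X}
    (hKL : K ⊆ L) (hy : y ∈ Lᶜ)
    (h : ∀ D ∈ complComponents K, ∃ w ∈ D \ L, y ∉ connectedComponentIn Lᶜ w) :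
    (complComponents K).encard + 1 ≤ (complComponents L).encard := by
  have : Nonempty X := ⟨y⟩
  choose! w hwD hwy using h
  have hinj : InjOn (fun D ↦ connectedComponentIn Lᶜ (w D)) (complComponents K) := by
    rintro _ ⟨x, hx, rfl⟩ _ ⟨x', hx', rfl⟩ heq
    obtain ⟨hw, hwL⟩ := hwD _ ⟨x, hx, rfl⟩
    have hw' := (hwD _ ⟨x', hx', rfl⟩).1
    have hmem := connectedComponentIn_mono _ (compl_subset_compl.2 hKL) <|
      heq.subset (mem_connectedComponentIn (F := Lᶜ) hwL)
    rw [connectedComponentIn_eq hw, connectedComponentIn_eq hw', connectedComponentIn_eq hmem]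
  have hnot : connectedComponentIn Lᶜ y ∉
      (fun D ↦ connectedComponentIn Lᶜ (w D)) '' complComponents K := by
    rintro ⟨D, hD, heq⟩
    exact hwy D hD (heq.symm.subset (mem_connectedComponentIn hy))
  rw [← hinj.encard_image, ← encard_insert_of_notMem hnot]
  refine encard_le_encard (insert_subset ⟨y, hy, rfl⟩ ?_)
  rintro _ ⟨D, hD, rfl⟩
  exact ⟨w D, (hwD D hD).2, rfl⟩

theorem complComponents_image {X Y : Type*} [TopologicalSpace X] [TopologicalSpace Y] (e : X ≃ₜ Y)
    (K : Set X) : complComponents (e '' K) = image e '' complComponents K := by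
  have himage : ∀ x ∈ Kᶜ,
      e '' connectedComponentIn Kᶜ x = connectedComponentIn (e '' K)ᶜ (e x) := fun x hx ↦ by
    rw [e.image_connectedComponentIn hx, e.image_compl]
  ext D
  constructor
  · rintro ⟨y, hy, rfl⟩
    rw [← e.image_compl] at hy
    obtain ⟨x, hx, rfl⟩ := hy
    exact ⟨_, ⟨x, hx, rfl⟩, himage x hx⟩
  · rintro ⟨_, ⟨x, hx, rfl⟩, rfl⟩
    exact ⟨e x, by simpa using hx, himage x hx⟩

theorem isPreconnected_compl_closedBall {E : Type*} [NormedAddCommGroup E] [NormedSpace ℝ E]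
    (hE : 1 < Module.rank ℝ E) (x : E) {r : ℝ} (hr : 0 ≤ r) : IsPreconnected (closedBall x r)ᶜ := by
  have himage : (closedBall x r)ᶜ = (fun p : E × ℝ ↦ x + p.2 • p.1) '' sphere 0 1 ×ˢ Ioi r := by
    ext y
    constructor
    · intro hy
      have hry : r < ‖y - x‖ := by simpa [dist_eq_norm] using hy
      have hpos := hr.trans_lt hry
      exact ⟨(‖y - x‖⁻¹ • (y - x), ‖y - x‖), by simp [norm_smul, hpos.ne', hry], by
        simp [smul_smul, hpos.ne']⟩
    · rintro ⟨⟨u, t⟩, ⟨hu, ht⟩, rfl⟩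
      have ht' : r < t := ht
      simpa [norm_smul, mem_sphere_zero_iff_norm.1 hu] using ht'.trans_le (le_abs_self t)
  rw [himage]
  exact ((isPreconnected_sphere hE 0 1).prod isPreconnected_Ioi).image _ (by fun_prop)

theorem existsUnique_unbounded_complComponents {E : Type*} [NormedAddCommGroup E] [NormedSpace ℝ E]
    (hE : 1 < Module.rank ℝ E) {K : Set E} (hK : IsBounded K) :
    ∃! D, D ∈ complComponents K ∧ ¬ IsBounded D := by
  have : Nontrivial E := rank_pos_iff_nontrivial.1 (zero_lt_one.trans hE)
  obtain ⟨r, hr, hKr⟩ := hK.subset_closedBall_lt 0 0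
  have hV : IsPreconnected (closedBall (0 : E) r)ᶜ := isPreconnected_compl_closedBall hE 0 hr.le
  have hVK : (closedBall (0 : E) r)ᶜ ⊆ Kᶜ := compl_subset_compl.2 hKr
  have hVb : ¬ IsBounded (closedBall (0 : E) r)ᶜ := fun h ↦
    NormedSpace.unbounded_univ ℝ E (union_compl_self (closedBall (0 : E) r) ▸
      isBounded_closedBall.union h)
  obtain ⟨x, hx⟩ : (closedBall (0 : E) r)ᶜ.Nonempty := by
    rw [nonempty_iff_ne_empty]
    rintro h
    exact hVb (h ▸ isBounded_empty)
  refine ⟨connectedComponentIn Kᶜ x, ⟨⟨x, hVK hx, rfl⟩, fun h ↦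
    hVb (h.subset (hV.subset_connectedComponentIn hx hVK))⟩, ?_⟩
  rintro _ ⟨⟨y, -, rfl⟩, hD⟩
  obtain ⟨z, hzy, hz⟩ : ∃ z ∈ connectedComponentIn Kᶜ y, z ∈ (closedBall (0 : E) r)ᶜ :=
    not_subset.1 fun h ↦ hD (isBounded_closedBall.subset h)
  rw [connectedComponentIn_eq hzy,
    connectedComponentIn_eq (hV.subset_connectedComponentIn hz hVK hx)]

end ComplementComponents

section RationalFunctions

open Set Metric Bornology Complex

/-- The rational function `z ↦ ∏ p, (z - p) ^ k p` with divisor `k`. -/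
noncomputable def ratFun (k : ℂ →₀ ℤ) (z : ℂ) : ℂ :=
  k.prod fun p n ↦ (z - p) ^ n

variable {k : ℂ →₀ ℤ} {K U : Set ℂ} {F : ℂ → ℂ} {p : ℂ} {n : ℤ}

theorem ratFun_ne_zero {z : ℂ} (hz : z ∉ k.support) : ratFun k z ≠ 0 :=
  Finsupp.prod_ne_zero_iff.2 fun _ hp ↦
    zpow_ne_zero _ <| sub_ne_zero.2 fun h ↦ hz (h ▸ hp)

theorem continuousOn_ratFun (hK : ∀ z ∈ K, z ∉ k.support) : ContinuousOn (ratFun k) K :=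
  continuousOn_finsetProd _ fun _ hp ↦ .zpow₀ (by fun_prop) _ fun z hz ↦
    .inl <| sub_ne_zero.2 fun h ↦ hK z hz (h ▸ hp)

theorem zpow_mul_ratFun_erase (hp : p ∈ k.support) (z : ℂ) :
    (z - p) ^ k p * ratFun (k.erase p) z = ratFun k z :=
  k.mul_prod_erase p (fun q n ↦ (z - q) ^ n) hp

theorem eq_zero_of_eqOn_frontier_zpow (hU : IsOpen U) (hUb : IsBounded U) (hp : p ∈ U)
    (hF : ContinuousOn F (closure U)) (hF₀ : ∀ z ∈ closure U, F z ≠ 0)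
    (hFp : EqOn F (fun z ↦ (z - p) ^ n) (frontier U)) : n = 0 := by
  classical
  have hpow₀ : ∀ z ∈ Uᶜ, z - p ≠ 0 := fun z hz h ↦ hz (sub_eq_zero.1 h ▸ hp)
  have hpow : ContinuousOn (fun z ↦ (z - p) ^ n) (closure Uᶜ) := by
    rw [hU.isClosed_compl.closure_eq]
    exact .zpow₀ (by fun_prop) _ fun z hz ↦ .inl (hpow₀ z hz)
  have hlog : HasLogOn (U.piecewise F fun z ↦ (z - p) ^ n) univ := by
    refine hasLogOn_of_convex convex_univ isOpen_univ
      (continuous_piecewise hFp hF hpow).continuousOn fun z _ ↦ ?_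
    by_cases hz : z ∈ U
    · simpa [hz] using hF₀ z (subset_closure hz)
    · simpa [hz] using zpow_ne_zero n (hpow₀ z hz)
  obtain ⟨r, hr, hUr⟩ := hUb.subset_ball_lt 0 p
  by_contra hn
  refine not_hasLogOn_sphere_zpow p hr hn ((hlog.mono (subset_univ _)).congr fun z hz ↦ ?_)
  exact piecewise_eq_of_notMem _ _ _ fun hzU ↦ (mem_ball.1 (hUr hzU)).ne hz

/- Extend the logarithm by Tietze's theorem. Dividing its exponential by the factors of
`ratFun k` with pole or zero outside the component `U` of `p` extends `z ↦ (z - p) ^ k p` from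
`frontier U` to a nonvanishing function on `closure U`. -/
theorem HasLogOn.eq_zero_of_ratFun (h : HasLogOn (ratFun k) K) (hK : IsClosed K)
    (hkK : ↑k.support ⊆ Kᶜ) (hinj : InjOn (connectedComponentIn Kᶜ) k.support)
    (hb : ∀ p ∈ k.support, IsBounded (connectedComponentIn Kᶜ p)) : k = 0 := by
  obtain ⟨l, hl, hlk⟩ := h
  obtain ⟨L, hL⟩ := ContinuousMap.exists_restrict_eq hK ⟨K.domRestrict l, hl.domRestrict⟩
  have hLk : ∀ z ∈ K, exp (L z) = ratFun k z := fun z hz ↦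
    (congrArg exp (DFunLike.congr_fun hL ⟨z, hz⟩)).trans (hlk hz)
  ext p
  by_contra hp
  replace hp : p ∈ k.support := Finsupp.mem_support_iff.2 hp
  have herase : ∀ z ∈ closure (connectedComponentIn Kᶜ p), z ∉ (k.erase p).support := by
    intro z hz hzk
    rw [Finsupp.support_erase, Finset.mem_erase] at hzk
    obtain hzU | hzK := closure_connectedComponentIn_compl_subset hK p hz
    · exact hzk.1 (hinj hzk.2 hp (connectedComponentIn_eq hzU).symm)
    · exact hkK hzk.2 hzK
  refine Finsupp.mem_support_iff.1 hp <| eq_zero_of_eqOn_frontier_zpow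
    (F := fun z ↦ exp (L z) / ratFun (k.erase p) z) hK.isOpen_compl.connectedComponentIn
    (hb p hp) (mem_connectedComponentIn (hkK hp))
    (.div (by fun_prop) (continuousOn_ratFun herase) fun z hz ↦ ratFun_ne_zero (herase z hz))
    (fun z hz ↦ div_ne_zero (exp_ne_zero _) (ratFun_ne_zero (herase z hz))) fun z hz ↦ ?_
  rw [div_eq_iff (ratFun_ne_zero (herase z (frontier_subset_closure hz))),
    zpow_mul_ratFun_erase hp, hLk z (frontier_connectedComponentIn_compl_subset hK p hz)]

/-- The homomorphism `k ↦ ∑ p, k p • d p` on divisors detects which rational functions without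
zeros and poles on `K` have a continuous logarithm on `K`. If `K` is a closed curve, then one can
take for `d p` the winding number of `K` around `p`. -/
def DetectsLogOn {V : Type*} [AddCommGroup V] (d : ℂ → V) (K : Set ℂ) : Prop :=
  ∀ k : ℂ →₀ ℤ, ↑k.support ⊆ Kᶜ → Finsupp.linearCombination ℤ d k = 0 → HasLogOn (ratFun k) K

theorem DetectsLogOn.encard_bounded_complComponents_le {V : Type*} [AddCommGroup V] {d : ℂ → V}
    (hd : DetectsLogOn d K) (hK : IsClosed K) :
    {D ∈ complComponents K | IsBounded D}.encard ≤ (Module.rank ℤ V).toENat := by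
  obtain ⟨S, hS, hSbij⟩ := exists_subset_bijOn {x ∈ Kᶜ | IsBounded (connectedComponentIn Kᶜ x)}
    (connectedComponentIn Kᶜ)
  have hlin : LinearIndepOn ℤ d S := linearIndepOn_iff.2 fun k hkS hk ↦
    (hd k (hkS.trans fun x hx ↦ (hS hx).1) hk).eq_zero_of_ratFun hK
      (hkS.trans fun x hx ↦ (hS hx).1) (hSbij.injOn.mono hkS) fun p hp ↦ (hS (hkS hp)).2
  have hcomp : {D ∈ complComponents K | IsBounded D} = connectedComponentIn Kᶜ '' S := by
    rw [hSbij.image_eq]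
    ext D
    constructor
    · rintro ⟨⟨x, hx, rfl⟩, hD⟩
      exact ⟨x, ⟨hx, hD⟩, rfl⟩
    · rintro ⟨x, ⟨hx, hD⟩, rfl⟩
      exact ⟨⟨x, hx, rfl⟩, hD⟩
  rw [hcomp, hSbij.injOn.encard_image]
  exact hlin.encard_le_toENat_rank

end RationalFunctions

section JordanCurves

open Set Metric Complex Topology

theorem circle_one_ne_neg_one : (1 : Circle) ≠ -1 := by
  norm_num [Circle.ext_iff, Circle.coe_neg]

/-- `γ` is a Jordan curve: the image of a continuous injective map from the circle. -/
def IsJordanCurve {X : Type*} [TopologicalSpace X] (γ : Set X) : Prop :=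
  ∃ φ : Circle → X, Continuous φ ∧ Function.Injective φ ∧ range φ = γ

namespace IsJordanCurve

variable {X Y : Type*} [TopologicalSpace X] [TopologicalSpace Y] {γ : Set X}

theorem isCompact (h : IsJordanCurve γ) : IsCompact γ := by
  obtain ⟨φ, hφ, -, rfl⟩ := h
  exact isCompact_range hφ

theorem nontrivial (h : IsJordanCurve γ) : γ.Nontrivial := by
  obtain ⟨φ, -, hφ, rfl⟩ := h
  exact ⟨φ 1, ⟨1, rfl⟩, φ (-1), ⟨-1, rfl⟩, hφ.ne circle_one_ne_neg_one⟩

theorem image (h : IsJordanCurve γ) {f : X → Y} (hf : Continuous f) (hinj : Function.Injective f) :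
    IsJordanCurve (f '' γ) := by
  obtain ⟨φ, hφ, hφinj, rfl⟩ := h
  exact ⟨f ∘ φ, hf.comp hφ, hinj.comp hφinj, range_comp f φ⟩

end IsJordanCurve

theorem isJordanCurve_range {X : Type*} [TopologicalSpace X]
    {φ : sphere (0 : EuclideanSpace ℝ (Fin 2)) 1 → X} (hφ : Continuous φ)
    (hinj : Function.Injective φ) : IsJordanCurve (range φ) := by
  let e : Circle ≃ₜ sphere (0 : EuclideanSpace ℝ (Fin 2)) 1 :=
    Complex.orthonormalBasisOneI.repr.toHomeomorph.subtype fun z ↦ by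
      simp [Submonoid.unitSphere]
  exact ⟨φ ∘ e, hφ.comp e.continuous, hinj.comp e.injective, e.surjective.range_comp φ⟩

/- The integer `n` is the winding number of `ψ` around `p`. -/
theorem exists_log_sub_increment {T : ℝ} {ψ : AddCircle T → ℂ} (hψ : Continuous ψ) {p : ℂ}
    (hp : p ∉ range ψ) : ∃ (l : ℝ → ℂ) (n : ℤ), Continuous l ∧ (∀ t : ℝ, exp (l t) = ψ t - p) ∧
      l T = l 0 + n * (2 * Real.pi * I) := by
  obtain ⟨l, hl, hexp⟩ : HasLogOn (fun t : ℝ ↦ ψ t - p) univ :=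
    hasLogOn_of_convex convex_univ isOpen_univ (by fun_prop) fun t _ h ↦ hp ⟨t, sub_eq_zero.1 h⟩
  replace hexp : ∀ t : ℝ, exp (l t) = ψ t - p := fun t ↦ hexp trivial
  obtain ⟨n, hn⟩ : ∃ n : ℤ, l T = l 0 + n * (2 * Real.pi * I) := by
    rw [← exp_eq_exp_iff_exists_int, hexp, hexp, AddCircle.coe_period, QuotientAddGroup.mk_zero]
  exact ⟨l, n, continuousOn_univ.1 hl, hexp, hn⟩

theorem exists_detectsLogOn_range {T : ℝ} [Fact (0 < T)] {ψ : AddCircle T → ℂ}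
    (hψ : Continuous ψ) (hinj : Function.Injective ψ) : ∃ d : ℂ → ℤ, DetectsLogOn d (range ψ) := by
  choose! L d hL hexp hd using fun p ↦ exists_log_sub_increment hψ (p := p)
  refine ⟨d, fun k hk hkd ↦ hasLogOn_range_of_comp (hψ.isClosedEmbedding hinj).isEmbedding ?_⟩
  let G : ℝ → ℂ := fun t ↦ k.sum fun p n ↦ n * L p t
  have hG : Continuous G := continuous_finsetSum _ fun p hp ↦ (hL p (hk hp)).const_mul _
  have hGexp : ∀ t : ℝ, exp (G t) = ratFun k (ψ t) := fun t ↦ by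
    simp only [G, Finsupp.sum, exp_sum, exp_int_mul]
    exact Finset.prod_congr rfl fun p hp ↦ by rw [hexp p (hk hp)]
  have hGT : G T = G 0 := by
    rw [Finsupp.linearCombination_apply] at hkd
    calc G T = k.sum fun p n ↦ n * L p 0 + (n • d p : ℤ) * (2 * Real.pi * I) :=
          Finsupp.sum_congr fun p hp ↦ by
            rw [hd p (hk hp)]
            push_cast [smul_eq_mul]
            ring
      _ = G 0 + (k.sum fun p n ↦ n • d p : ℤ) * (2 * Real.pi * I) := by
          simp only [G, Finsupp.sum, Finset.sum_add_distrib, ← Finset.sum_mul, Int.cast_sum]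
      _ = G 0 := by rw [hkd, Int.cast_zero, zero_mul, add_zero]
  refine ⟨AddCircle.liftIco T 0 G,
    (AddCircle.liftIco_zero_continuous hGT.symm hG.continuousOn).continuousOn, fun x _ ↦ ?_⟩
  obtain ⟨t, ht, rfl⟩ := AddCircle.coe_image_Ico_eq T 0 ▸ mem_univ x
  exact (congrArg exp (AddCircle.liftIco_coe_apply ht)).trans (hGexp t)

theorem IsJordanCurve.exists_detectsLogOn {γ : Set ℂ} (hγ : IsJordanCurve γ) :
    ∃ d : ℂ → ℤ, DetectsLogOn d γ := by
  obtain ⟨φ, hφ, hinj, rfl⟩ := hγ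
  have : Fact (0 < 2 * Real.pi) := ⟨Real.two_pi_pos⟩
  rw [← AddCircle.homeomorphCircle'.surjective.range_comp]
  exact exists_detectsLogOn_range (hφ.comp (Homeomorph.continuous _))
    (hinj.comp (Homeomorph.injective _))

theorem joinedIn_circle_im_nonneg : JoinedIn {z : Circle | 0 ≤ (z : ℂ).im} 1 (-1) := by
  refine .ofLine (f := fun t ↦ Circle.exp (t * Real.pi)) (by fun_prop) (by simp)
    (by simp [Circle.ext_iff]) ?_
  rintro _ ⟨t, ⟨ht₀, ht₁⟩, rfl⟩
  simpa [exp_ofReal_mul_I_im, ← ofReal_mul] using Real.sin_nonneg_of_nonneg_of_le_pi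
    (by positivity) (mul_le_of_le_one_left Real.pi_nonneg ht₁)

theorem joinedIn_circle_im_nonpos : JoinedIn {z : Circle | (z : ℂ).im ≤ 0} 1 (-1) := by
  have h := joinedIn_circle_im_nonneg.map_continuousOn (f := (·⁻¹)) continuous_inv.continuousOn
  rw [inv_one, inv_neg, inv_one] at h
  refine h.mono ?_
  rintro _ ⟨z, hz, rfl⟩
  simpa [Circle.coe_inv_eq_conj] using hz

theorem circle_im_nonneg_inter_im_nonpos :
    {z : Circle | 0 ≤ (z : ℂ).im} ∩ {z : Circle | (z : ℂ).im ≤ 0} = {1, -1} := by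
  ext z
  have hz : (z : ℂ).im = 0 → (z : ℂ).re = 1 ∨ (z : ℂ).re = -1 := fun h ↦ by
    simpa [normSq_apply, h, mul_self_eq_one_iff] using z.normSq_coe
  have him : (z : ℂ).im = 0 ↔ z = 1 ∨ z = -1 := by
    simpa [Circle.ext_iff, Complex.ext_iff, ← or_and_right] using hz
  simp [← him, le_antisymm_iff, and_comm]

namespace IsJordanCurve

variable {X : Type*} [TopologicalSpace X] {γ : Set X} {a : X}

theorem exists_circle_map_one_eq (hγ : IsJordanCurve γ) (ha : a ∈ γ) :
    ∃ φ : Circle → X, Continuous φ ∧ Function.Injective φ ∧ range φ = γ ∧ φ 1 = a := by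
  obtain ⟨φ, hφ, hinj, rfl⟩ := hγ
  obtain ⟨w, rfl⟩ := ha
  exact ⟨fun z ↦ φ (w * z), by fun_prop, hinj.comp (mul_right_injective w),
    (mul_left_surjective w).range_comp φ, congrArg φ (mul_one w)⟩

theorem exists_arcs (hγ : IsJordanCurve γ) (ha : a ∈ γ) :
    ∃ b A B, b ≠ a ∧ IsCompact A ∧ IsCompact B ∧ A ∪ B = γ ∧ A ∩ B = {a, b} ∧
      JoinedIn A a b ∧ JoinedIn B a b := by
  obtain ⟨φ, hφ, hinj, rfl, rfl⟩ := hγ.exists_circle_map_one_eq ha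
  have him : Continuous fun z : Circle ↦ (z : ℂ).im := by fun_prop
  refine ⟨φ (-1), φ '' {z | 0 ≤ (z : ℂ).im}, φ '' {z | (z : ℂ).im ≤ 0},
    hinj.ne circle_one_ne_neg_one.symm, (isClosed_le continuous_const him).isCompact.image hφ,
    (isClosed_le him continuous_const).isCompact.image hφ, ?_, ?_,
    joinedIn_circle_im_nonneg.map_continuousOn hφ.continuousOn,
    joinedIn_circle_im_nonpos.map_continuousOn hφ.continuousOn⟩
  · rw [← image_union, ← image_univ]
    congr
    ext z
    simpa using le_total 0 (z : ℂ).im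
  · rw [← image_inter hinj, circle_im_nonneg_inter_im_nonpos, image_pair]

end IsJordanCurve

/- Split `γ` at `a` into two arcs. If the complement of `γ` were not separated near `a`, then a
logarithm of `z - a` would exist on a punctured neighbourhood of `a`. -/
theorem IsJordanCurve.not_diff_subset_of_isPreconnected {γ U P : Set ℂ} {a : ℂ}
    (hγ : IsJordanCurve γ) (ha : a ∈ γ) (hU : U ∈ 𝓝 a) (hP : IsPreconnected P) (hPγ : P ⊆ γᶜ) :
    ¬ U \ γ ⊆ P := by
  intro hUP
  obtain ⟨b, A, B, hba, hA, hB, rfl, hAB, hjA, hjB⟩ := hγ.exists_arcs ha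
  obtain ⟨r, hr, hrU⟩ := Metric.mem_nhds_iff.1 (Filter.inter_mem hU (isOpen_ne.mem_nhds hba.symm))
  have hb : ∀ z ∈ ball a r, z - b ≠ 0 := fun z hz ↦ sub_ne_zero.2 (hrU hz).2
  have hdiv : HasLogOn (fun z ↦ (z - a) / (z - b)) (ball a r \ {a, b}) := hAB ▸
    (hasLogOn_div_compl_of_joinedIn hjA).diff_inter (hasLogOn_div_compl_of_joinedIn hjB)
      hA.isClosed hB.isClosed isOpen_ball hP hPγ fun z hz ↦ hUP ⟨(hrU hz.1).1, hz.2⟩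
  have hsub : HasLogOn (· - b) (ball a r) :=
    hasLogOn_of_convex (convex_ball a r) isOpen_ball (by fun_prop) hb
  have hsphere : sphere a (r / 2) ⊆ ball a r \ {a, b} := by
    intro z hz
    have hzr : z ∈ ball a r := sphere_subset_ball (half_lt_self hr) hz
    refine ⟨hzr, ?_⟩
    rintro (rfl | rfl)
    · exact (half_pos hr).ne (by simpa using hz)
    · exact hb _ hzr (sub_self _)
  refine not_hasLogOn_sphere_zpow a (half_pos hr) one_ne_zero
    (((hdiv.mono hsphere).mul (hsub.mono (hsphere.trans sdiff_subset))).congr fun z hz ↦ ?_)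
  simp [div_mul_cancel₀ _ (hb z (hsphere hz).1)]

theorem IsJordanCurve.dense_compl {γ : Set ℂ} (hγ : IsJordanCurve γ) : Dense γᶜ := by
  refine dense_iff_inter_open.2 fun U hU ⟨a, haU⟩ ↦ ?_
  by_cases ha : a ∈ γ
  · by_contra h
    exact hγ.not_diff_subset_of_isPreconnected ha (hU.mem_nhds haU) isPreconnected_empty
      (empty_subset _) (not_nonempty_iff_eq_empty.1 h).subset
  · exact ⟨a, haU, ha⟩

theorem IsJordanCurve.encard_complComponents_add_one_le_union {γ K : Set ℂ} (hγ : IsJordanCurve γ)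
    (hK : IsClosed K) (hγK : ¬ γ ⊆ K) :
    (complComponents K).encard + 1 ≤ (complComponents (K ∪ γ)).encard := by
  obtain ⟨a, ha, haK⟩ := not_subset.1 hγK
  have hopen : ∀ z, IsOpen (connectedComponentIn Kᶜ z) := fun _ ↦
    hK.isOpen_compl.connectedComponentIn
  have haV : a ∈ connectedComponentIn Kᶜ a := mem_connectedComponentIn haK
  obtain ⟨x, hxV, hxγ⟩ := hγ.dense_compl.inter_open_nonempty _ (hopen a) ⟨a, haV⟩
  obtain ⟨y, ⟨hyV, hyγ⟩, hyx⟩ := not_subset.1 <|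
    hγ.not_diff_subset_of_isPreconnected ha ((hopen a).mem_nhds haV)
      (isPreconnected_connectedComponentIn (x := x) (F := (K ∪ γ)ᶜ))
      ((connectedComponentIn_subset _ _).trans (compl_subset_compl.2 subset_union_right))
  have hunion : ∀ {z w}, w ∈ connectedComponentIn Kᶜ z → w ∉ γ → w ∉ K ∪ γ := fun hw hwγ h ↦
    h.elim (connectedComponentIn_subset _ _ hw) hwγ
  refine encard_complComponents_add_one_le subset_union_left (hunion hyV hyγ) ?_
  rintro _ ⟨z, hz, rfl⟩
  by_cases hzV : z ∈ connectedComponentIn Kᶜ a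
  · rw [← connectedComponentIn_eq hzV]
    exact ⟨x, ⟨hxV, hunion hxV hxγ⟩, hyx⟩
  · obtain ⟨w, hw, hwγ⟩ :=
      hγ.dense_compl.inter_open_nonempty _ (hopen z) ⟨z, mem_connectedComponentIn hz⟩
    refine ⟨w, ⟨hw, hunion hw hwγ⟩, fun hyw ↦ hzV ?_⟩
    have hyz : y ∈ connectedComponentIn Kᶜ z := connectedComponentIn_eq hw ▸
      connectedComponentIn_mono w (compl_subset_compl.2 subset_union_left) hyw
    rw [connectedComponentIn_eq hyV, ← connectedComponentIn_eq hyz]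
    exact mem_connectedComponentIn hz

end JordanCurves

section FiniteUnions

open Set Bornology

theorem iUnion_fin_induction {α : Type*} {m : ℕ} (γ : Fin m → Set α) {P : ℕ → Set α → Prop}
    (zero : P 0 ∅) (succ : ∀ j : Fin m, P j (⋃ i < j, γ i) → P (j + 1) ((⋃ i < j, γ i) ∪ γ j)) :
    P m (⋃ i, γ i) := by
  have h : ∀ n ≤ m, P n (⋃ i ∈ {i : Fin m | i < n}, γ i) := by
    intro n
    induction n with
    | zero => simpa using zero
    | succ n ih =>
      intro hn
      have hinsert : {i : Fin m | i < n + 1} = insert ⟨n, hn⟩ {i : Fin m | i < n} := by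
        ext i
        simp [Fin.ext_iff, le_iff_eq_or_lt]
      rw [hinsert, biUnion_insert, union_comm]
      exact succ ⟨n, hn⟩ (ih (by lia))
  simpa using h m le_rfl

theorem subsingleton_inter_biUnion_lt {ι α : Type*} [LinearOrder ι] {γ : ι → Set α}
    (hpair : ∀ i j, i ≠ j → (γ i ∩ γ j).Subsingleton)
    (hone : ∀ i j k l, i ≠ j → k ≠ l → (γ i ∩ γ j).Nonempty → (γ k ∩ γ l).Nonempty →
      ({i, j} : Set ι) = {k, l}) (j : ι) : (γ j ∩ ⋃ i < j, γ i).Subsingleton := by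
  intro x hx y hy
  simp only [mem_inter_iff, mem_iUnion] at hx hy
  obtain ⟨hxj, i, hi, hxi⟩ := hx
  obtain ⟨hyj, k, hk, hyk⟩ := hy
  have hik : i = k := by
    have hi' : i ∈ ({k, j} : Set ι) :=
      (hone i j k j hi.ne hk.ne ⟨x, hxi, hxj⟩ ⟨y, hyk, hyj⟩).subset (mem_insert i {j})
    exact hi'.resolve_right hi.ne
  exact hpair i j hi.ne ⟨hxi, hxj⟩ ⟨hik ▸ hyk, hyj⟩

theorem HasLogOn.iUnion_fin {X : Type*} [TopologicalSpace X] {f : X → ℂ} {m : ℕ}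
    {γ : Fin m → Set X} (hf : ∀ i, HasLogOn f (γ i)) (hγ : ∀ i, IsClosed (γ i))
    (hconn : ∀ j, IsPreconnected (γ j ∩ ⋃ i < j, γ i)) : HasLogOn f (⋃ i, γ i) :=
  iUnion_fin_induction γ (P := fun _ ↦ HasLogOn f) (hasLogOn_empty f) fun j h ↦
    h.union_of_isClosed (hf j) ((toFinite _).isClosed_biUnion fun i _ ↦ hγ i) (hγ j)
      (inter_comm (γ j) _ ▸ hconn j)

theorem DetectsLogOn.iUnion_fin {m : ℕ} {γ : Fin m → Set ℂ} {V : Fin m → Type*}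
    [∀ i, AddCommGroup (V i)] {d : ∀ i, ℂ → V i} (hd : ∀ i, DetectsLogOn (d i) (γ i))
    (hγ : ∀ i, IsClosed (γ i)) (hconn : ∀ j, IsPreconnected (γ j ∩ ⋃ i < j, γ i)) :
    DetectsLogOn (fun p i ↦ d i p) (⋃ i, γ i) := by
  refine fun k hk hkd ↦ .iUnion_fin (fun i ↦ hd i k ?_ ?_) hγ hconn
  · exact hk.trans (compl_subset_compl.2 (subset_iUnion γ i))
  · exact (Finsupp.apply_linearCombination ℤ (.proj i) _ k).symm.trans (congrFun hkd i)

theorem encard_complComponents_iUnion {m : ℕ} {γ : Fin m → Set ℂ}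
    (hγ : ∀ i, IsJordanCurve (γ i)) (hconn : ∀ j, IsPreconnected (γ j ∩ ⋃ i < j, γ i))
    (hnew : ∀ j, ¬ γ j ⊆ ⋃ i < j, γ i) : (complComponents (⋃ i, γ i)).encard = m + 1 := by
  have hclosed : ∀ i, IsClosed (γ i) := fun i ↦ (hγ i).isCompact.isClosed
  choose d hd using fun i ↦ (hγ i).exists_detectsLogOn
  have hbounded : {D ∈ complComponents (⋃ i, γ i) | IsBounded D}.encard ≤ m := by
    simpa [rank_fin_fun] using (DetectsLogOn.iUnion_fin hd hclosed hconn
      |>.encard_bounded_complComponents_le (isClosed_iUnion_of_finite hclosed))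
  obtain ⟨D₀, -, hD₀⟩ := existsUnique_unbounded_complComponents
    (Complex.rank_real_complex ▸ Cardinal.one_lt_two)
    (isCompact_iUnion fun i ↦ (hγ i).isCompact).isBounded
  refine le_antisymm ?_ ?_
  · calc (complComponents (⋃ i, γ i)).encard
        ≤ (insert D₀ {D ∈ complComponents (⋃ i, γ i) | IsBounded D}).encard :=
          encard_le_encard fun D hD ↦ (em (IsBounded D)).symm.imp (fun h ↦ hD₀ D ⟨hD, h⟩) (⟨hD, ·⟩)
      _ ≤ m + 1 := (encard_insert_le _ _).trans (by gcongr)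
  · refine iUnion_fin_induction γ (P := fun n K ↦ (n + 1 : ℕ∞) ≤ (complComponents K).encard) ?_ ?_
    · simpa [one_le_encard_iff_nonempty] using ⟨_, 0, notMem_empty 0, rfl⟩
    · intro j hj
      push_cast
      exact (add_le_add_left hj 1).trans <| (hγ j).encard_complComponents_add_one_le_union
        ((toFinite _).isClosed_biUnion fun i _ ↦ hclosed i) (hnew j)

theorem encard_complComponents_iUnion_of_finrank_eq_two {E : Type*} [NormedAddCommGroup E]
    [NormedSpace ℝ E] (hE : Module.finrank ℝ E = 2) {m : ℕ} {γ : Fin m → Set E}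
    (hγ : ∀ i, IsJordanCurve (γ i)) (hconn : ∀ j, IsPreconnected (γ j ∩ ⋃ i < j, γ i))
    (hnew : ∀ j, ¬ γ j ⊆ ⋃ i < j, γ i) : (complComponents (⋃ i, γ i)).encard = m + 1 := by
  have : FiniteDimensional ℝ E := .of_finrank_pos (by lia)
  let e : E ≃L[ℝ] ℂ := .ofFinrankEq (hE.trans Complex.finrank_real_complex.symm)
  have himage : ∀ j, ⋃ i < j, e '' γ i = e '' ⋃ i < j, γ i := fun j ↦ (image_iUnion₂ _ _).symm
  rw [← (image_injective.2 e.injective).encard_image, ← e.coe_toHomeomorph,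
    ← complComponents_image, image_iUnion]
  refine encard_complComponents_iUnion (fun i ↦ (hγ i).image e.continuous e.injective)
    (fun j ↦ ?_) (fun j ↦ ?_)
  · rw [e.coe_toHomeomorph, himage, ← image_inter e.injective]
    exact (hconn j).image e e.continuous.continuousOn
  · rw [e.coe_toHomeomorph, himage, image_subset_image_iff e.injective]
    exact hnew j

theorem exists_injective_fin_range_eq_of_encard_eq {α : Type*} {S : Set α} {n : ℕ}
    (hS : S.encard = n) : ∃ C : Fin n → α, Function.Injective C ∧ S = range C := by
  have := (finite_of_encard_eq_coe hS).to_subtype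
  let e : S ≃ Fin n := Finite.equivFinOfCardEq (by
    rw [Nat.card_coe_set_eq, ncard_def, hS, ENat.toNat_natCast])
  exact ⟨Subtype.val ∘ e.symm, Subtype.val_injective.comp e.symm.injective, by
    rw [e.symm.surjective.range_comp, Subtype.range_coe]⟩

theorem complement_of_jordan_curve_family_components_general {E : Type*} [NormedAddCommGroup E]
    [NormedSpace ℝ E] (hE : Module.finrank ℝ E = 2) {m : ℕ} {γ : Fin m → Set E}
    (hJordan : ∀ i, IsJordanCurve (γ i)) (hconn : ∀ j, IsPreconnected (γ j ∩ ⋃ i < j, γ i))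
    (hnew : ∀ j, ¬ γ j ⊆ ⋃ i < j, γ i) :
    ∃ C : Fin (m + 1) → Set E, Function.Injective C ∧ complComponents (⋃ i, γ i) = range C ∧
      ∃ i₀, ¬ IsBounded (C i₀) ∧ ∀ i, i ≠ i₀ → IsBounded (C i) := by
  obtain ⟨C, hCinj, hC⟩ := exists_injective_fin_range_eq_of_encard_eq
    (encard_complComponents_iUnion_of_finrank_eq_two hE hJordan hconn hnew)
  obtain ⟨_, ⟨hD₀, hunbounded⟩, hunique⟩ := existsUnique_unbounded_complComponents
    (Module.one_lt_rank_of_one_lt_finrank (by simp [hE]))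
    (isCompact_iUnion fun i ↦ (hJordan i).isCompact).isBounded
  obtain ⟨i₀, rfl⟩ := hC.subset hD₀
  refine ⟨C, hCinj, hC, i₀, hunbounded, fun i hi ↦ ?_⟩
  by_contra hCi
  exact hi (hCinj (hunique (C i) ⟨hC.superset ⟨i, rfl⟩, hCi⟩))

end FiniteUnions

/-- Given `m` distinct Jordan curves `γ 0, …, γ (m-1)` in `ℝ²` such that at most one
pair of them is semi-disjoint (intersecting in exactly one point) and all the other
pairs are disjoint, the complement of their union `Γ` has exactly `m + 1` connected
components, of which exactly one is unbounded and the remaining `m` are bounded. -/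
theorem complement_of_jordan_curve_family_components
    (m : ℕ)
    (γ : Fin m → Set (EuclideanSpace ℝ (Fin 2)))
    (hJordan : ∀ i, ∃ φ : (Metric.sphere (0 : EuclideanSpace ℝ (Fin 2)) 1 :
        Set (EuclideanSpace ℝ (Fin 2))) → EuclideanSpace ℝ (Fin 2),
        Continuous φ ∧ Function.Injective φ ∧ γ i = Set.range φ)
    (hdist : Function.Injective γ)
    (hpair : ∀ i j, i ≠ j → γ i ∩ γ j = ∅ ∨ ∃ p, γ i ∩ γ j = {p})
    (hone : ∀ i j k l, i ≠ j → k ≠ l → (γ i ∩ γ j).Nonempty → (γ k ∩ γ l).Nonempty →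
        ({i, j} : Set (Fin m)) = {k, l})
    (Γ : Set (EuclideanSpace ℝ (Fin 2))) (hΓ : Γ = ⋃ i, γ i) :
    ∃ C : Fin (m + 1) → Set (EuclideanSpace ℝ (Fin 2)),
      Function.Injective C ∧
      {D | ∃ x ∈ Γᶜ, D = connectedComponentIn Γᶜ x} = Set.range C ∧
      ∃ i₀ : Fin (m + 1), ¬ Bornology.IsBounded (C i₀) ∧
        ∀ i, i ≠ i₀ → Bornology.IsBounded (C i) := by
  subst hΓ
  have hγ : ∀ i, IsJordanCurve (γ i) := fun i ↦
    let ⟨_, hφ, hinj, h⟩ := hJordan i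
    h ▸ isJordanCurve_range hφ hinj
  have hsub : ∀ j, (γ j ∩ ⋃ i < j, γ i).Subsingleton :=
    subsingleton_inter_biUnion_lt (fun i j hij ↦
      Set.subsingleton_iff_eq_empty_or_singleton.2 (hpair i j hij)) hone
  exact complement_of_jordan_curve_family_components_general finrank_euclideanSpace_fin hγ
    (fun j ↦ (hsub j).isPreconnected) fun j hj ↦
    (hγ j).nontrivial.not_subsingleton (Set.inter_eq_left.2 hj ▸ hsub j)
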